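/- For every d ≥ 1 and every α > d/2 there exists a constant C_α > 0, depending only on α and d, with the following property: for every integer N ≥ 2, every probability measure ρ̄ on 𝕋^d, and every probability measure ρ_N on (𝕋^d)^N with H(ρ_N | ρ̄^{⊗N}) < ∞, ∫_{(𝕋^d)^N} Σ_{k ∈ ℤ^d} ⟨k⟩^{−2α} | (1/N) Σ_{i=1}^N e_k(x_i) − ∫_{𝕋^d} e_k dρ̄ |² dρ_N(x_1,…,x_N) ≤ (C_α/N) ( H(ρ_N | ρ̄^{⊗N}) + 1 ). -/

import Mathlib

/-!
Each Fourier mode is treated separately. Under `ρ̄^{⊗N}` the fluctuation `⟨μ_N - ρ̄, e_k⟩` is an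
average of `N` independent centred bounded variables, so by Hoeffding its real and imaginary parts
are sub-Gaussian with variance proxy `1/N`, and the exponential moment of `N/4` times the square of
either part is at most `√2`. The Donsker–Varadhan inequality turns this into the second moment bound
`(4/N)(H + 1)` under `ρ_N`, uniformly in `k`, and `∑ ⟨k⟩^{-2α}` converges because `2α > d`.
-/

open MeasureTheory Classical

/-- The `d`-dimensional torus `𝕋^d = (ℝ/2πℤ)^d`. -/
abbrev Torus (d : ℕ) := Fin d → AddCircle (2 * Real.pi)

/-- The Fourier character `e_k(x) = exp(√−1 k·x)` on the torus, for `k ∈ ℤ^d`. -/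
noncomputable def ek (d : ℕ) (k : Fin d → ℤ) (x : Torus d) : ℂ :=
  ∏ j, fourier (k j) (x j)

/-- The relative entropy `H(μ|ν) := ∫ (dμ/dν) log(dμ/dν) dν` if `μ ≪ ν` (and the integrand
is integrable; otherwise `+∞`), with values in the extended reals. -/
noncomputable def relEntropy {E : Type*} [MeasurableSpace E] (μ ν : Measure E) : EReal :=
  if μ ≪ ν ∧ Integrable
      (fun x => (μ.rnDeriv ν x).toReal * Real.log (μ.rnDeriv ν x).toReal) ν
  then ((∫ x, (μ.rnDeriv ν x).toReal * Real.log (μ.rnDeriv ν x).toReal ∂ν : ℝ) : EReal)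
  else ⊤

open InformationTheory ProbabilityTheory
open scoped NNReal ENNReal

section GaussianLinearization

theorem lintegral_exp_mul_sq_gaussianReal {v : ℝ≥0} {a : ℝ} (h : 2 * a * v < 1) :
    ∫⁻ x, ENNReal.ofReal (Real.exp (a * x ^ 2)) ∂gaussianReal 0 v =
      ENNReal.ofReal (√(1 - 2 * a * v))⁻¹ := by
  rcases eq_or_ne v 0 with rfl | hv
  · simp
  have hb : 0 < (1 - 2 * a * v) / (2 * v) := div_pos (by linarith) (by positivity)
  have density_mul (x : ℝ) : gaussianPDFReal 0 v x * Real.exp (a * x ^ 2) =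
      (√(2 * Real.pi * v))⁻¹ * Real.exp (-((1 - 2 * a * v) / (2 * v)) * x ^ 2) := by
    rw [gaussianPDFReal, mul_assoc, ← Real.exp_add]
    congr 2
    field_simp
    ring
  calc ∫⁻ x, ENNReal.ofReal (Real.exp (a * x ^ 2)) ∂gaussianReal 0 v
      = ∫⁻ x, ENNReal.ofReal (gaussianPDFReal 0 v x * Real.exp (a * x ^ 2)) := by
        rw [gaussianReal_of_var_ne_zero 0 hv,
          lintegral_withDensity_eq_lintegral_mul _ (measurable_gaussianPDF 0 v) (by fun_prop)]
        simp only [Pi.mul_apply, gaussianPDF,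
          ENNReal.ofReal_mul (gaussianPDFReal_nonneg 0 v _)]
    _ = ENNReal.ofReal ((√(2 * Real.pi * v))⁻¹ * √(Real.pi / ((1 - 2 * a * v) / (2 * v)))) := by
        simp only [density_mul]
        rw [← ofReal_integral_eq_lintegral_ofReal ((integrable_exp_neg_mul_sq hb).const_mul _)
          (ae_of_all _ fun x => by positivity), integral_const_mul, integral_gaussian]
    _ = ENNReal.ofReal (√(1 - 2 * a * v))⁻¹ := by
        rw [← Real.sqrt_inv, ← Real.sqrt_inv, ← Real.sqrt_mul (by positivity)]
        congr 2
        field_simp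

variable {Ω : Type*} [MeasurableSpace Ω] {ν : Measure Ω} {X : Ω → ℝ} {c s : ℝ≥0}

-- Linearize the square: `exp (s X²)` is the mgf at `X` of a Gaussian variable of variance `2s`.
theorem lintegral_exp_mul_sq_le_of_hasSubgaussianMGF [SFinite ν] (hX : HasSubgaussianMGF X c ν)
    (hs : 2 * c * s < 1) :
    ∫⁻ ω, ENNReal.ofReal (Real.exp (s * X ω ^ 2)) ∂ν ≤
      ENNReal.ofReal (√(1 - 2 * c * s))⁻¹ := by
  have linearize (x : ℝ) : ENNReal.ofReal (Real.exp (s * x ^ 2)) =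
      ∫⁻ g, ENNReal.ofReal (Real.exp (g * x)) ∂gaussianReal 0 (2 * s) := by
    have hmgf := congrFun (mgf_fun_id_gaussianReal (μ := 0) (v := 2 * s)) x
    simp only [mgf, mul_comm x] at hmgf
    rw [← ofReal_integral_eq_lintegral_ofReal
      (by simpa only [mul_comm x] using integrable_exp_mul_gaussianReal x)
      (ae_of_all _ fun g => (Real.exp_pos _).le), hmgf]
    congr 2
    push_cast
    ring
  have hmeas : AEMeasurable X ν := hX.aemeasurable
  calc ∫⁻ ω, ENNReal.ofReal (Real.exp (s * X ω ^ 2)) ∂ν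
      = ∫⁻ g, ∫⁻ ω, ENNReal.ofReal (Real.exp (g * X ω)) ∂ν ∂gaussianReal 0 (2 * s) := by
        simp only [linearize]
        exact lintegral_lintegral_swap
          (Real.measurable_exp.comp_aemeasurable
            (measurable_snd.aemeasurable.mul hmeas.comp_fst)).ennreal_ofReal
    _ ≤ ∫⁻ g, ENNReal.ofReal (Real.exp (c / 2 * g ^ 2)) ∂gaussianReal 0 (2 * s) := by
        refine lintegral_mono fun g => ?_
        rw [← ofReal_integral_eq_lintegral_ofReal (hX.integrable_exp_mul g)
          (ae_of_all _ fun ω => (Real.exp_pos _).le)]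
        exact ENNReal.ofReal_le_ofReal ((hX.mgf_le g).trans_eq (by ring_nf))
    _ = ENNReal.ofReal (√(1 - 2 * c * s))⁻¹ := by
        have hs' : 2 * (c : ℝ) * s < 1 := by exact_mod_cast hs
        rw [lintegral_exp_mul_sq_gaussianReal (by push_cast; linarith only [hs'])]
        push_cast
        ring_nf

theorem integrable_exp_mul_sq_of_hasSubgaussianMGF [SFinite ν] (hX : HasSubgaussianMGF X c ν)
    (hs : 2 * c * s < 1) : Integrable (fun ω => Real.exp (s * X ω ^ 2)) ν := by
  refine (lintegral_ofReal_ne_top_iff_integrable ?_ (ae_of_all _ fun ω => (Real.exp_pos _).le)).1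
    ((lintegral_exp_mul_sq_le_of_hasSubgaussianMGF hX hs).trans_lt ENNReal.ofReal_lt_top).ne
  exact (Real.measurable_exp.comp_aemeasurable
    ((hX.aemeasurable.pow_const 2).const_mul _)).aestronglyMeasurable

theorem integral_exp_mul_sq_le_of_hasSubgaussianMGF [SFinite ν] (hX : HasSubgaussianMGF X c ν)
    (hs : 2 * c * s < 1) :
    ∫ ω, Real.exp (s * X ω ^ 2) ∂ν ≤ (√(1 - 2 * c * s))⁻¹ := by
  rw [← ENNReal.ofReal_le_ofReal_iff (by positivity), ofReal_integral_eq_lintegral_ofReal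
    (integrable_exp_mul_sq_of_hasSubgaussianMGF hX hs) (ae_of_all _ fun ω => (Real.exp_pos _).le)]
  exact lintegral_exp_mul_sq_le_of_hasSubgaussianMGF hX hs

end GaussianLinearization

section Entropy

variable {Ω : Type*} [MeasurableSpace Ω] {μ ν : Measure Ω}

theorem relEntropy_eq_coe_klDiv [IsProbabilityMeasure μ] [IsProbabilityMeasure ν] :
    relEntropy μ ν = (klDiv μ ν : EReal) := by
  by_cases hac : μ ≪ ν
  · have hint : Integrable (fun x => (μ.rnDeriv ν x).toReal * Real.log (μ.rnDeriv ν x).toReal) ν ↔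
        Integrable (llr μ ν) μ := integrable_rnDeriv_mul_log_iff hac
    by_cases hllr : Integrable (llr μ ν) μ
    · rw [relEntropy, if_pos ⟨hac, hint.2 hllr⟩, integral_rnDeriv_mul_log hac,
        ← toReal_klDiv_of_measure_eq hac (by simp),
        EReal.coe_ennreal_toReal (klDiv_ne_top hac hllr)]
    · rw [relEntropy, if_neg (fun h => hllr (hint.1 h.2)), klDiv_of_not_integrable hllr,
        EReal.coe_ennreal_top]
  · rw [relEntropy, if_neg (fun h => hac h.1), klDiv_of_not_ac hac, EReal.coe_ennreal_top]

/-- The Donsker–Varadhan inequality: the difference of the two sides is the relative entropy of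
`μ` with respect to `ν.tilted f`. -/
theorem integral_le_toReal_klDiv_add_log_integral_exp [IsProbabilityMeasure μ]
    [IsProbabilityMeasure ν] (hμν : klDiv μ ν ≠ ∞) {f : Ω → ℝ} (hfμ : Integrable f μ)
    (hfν : Integrable (fun ω => Real.exp (f ω)) ν) :
    ∫ ω, f ω ∂μ ≤ (klDiv μ ν).toReal + Real.log (∫ ω, Real.exp (f ω) ∂ν) := by
  obtain ⟨hac, hllr⟩ := klDiv_ne_top_iff.1 hμν
  have : IsProbabilityMeasure (ν.tilted f) := isProbabilityMeasure_tilted hfν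
  have gibbs : 0 ≤ ∫ ω, llr μ (ν.tilted f) ω ∂μ := by
    simpa using integral_llr_add_sub_measure_univ_nonneg
      (hac.trans (absolutelyContinuous_tilted hfν))
      (integrable_llr_tilted_right hac hfμ hllr hfν)
  rw [integral_llr_tilted_right hac hfμ hfν hllr] at gibbs
  rw [toReal_klDiv_of_measure_eq hac (by simp)]
  linarith

theorem integral_sq_le_of_hasSubgaussianMGF [IsProbabilityMeasure μ] [IsProbabilityMeasure ν]
    (hμν : klDiv μ ν ≠ ∞) {X : Ω → ℝ} {c : ℝ≥0} (hX : HasSubgaussianMGF X c ν)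
    (hXμ : MemLp X 2 μ) :
    ∫ ω, X ω ^ 2 ∂μ ≤ 4 * c * ((klDiv μ ν).toReal + 1) := by
  rcases eq_or_ne c 0 with rfl | hc
  · have hX_zero : X =ᵐ[μ] 0 :=
      (klDiv_ne_top_iff.1 hμν).1.ae_eq hX.ae_eq_zero_of_hasSubgaussianMGF_zero
    have hsq : (fun ω => X ω ^ 2) =ᵐ[μ] 0 := hX_zero.mono fun ω h => by simp [h]
    simp [integral_congr_ae hsq]
  set s : ℝ≥0 := (4 * c)⁻¹ with hs_def
  have hcs : c * s = 1 / 4 := by rw [hs_def]; field_simp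
  have hs : 2 * c * s < 1 := by
    rw [mul_assoc, hcs]
    norm_num [← NNReal.coe_lt_coe]
  have exp_moment : ∫ ω, Real.exp (s * X ω ^ 2) ∂ν ≤ √2 := by
    refine (integral_exp_mul_sq_le_of_hasSubgaussianMGF hX hs).trans_eq ?_
    rw [mul_assoc, ← NNReal.coe_mul, hcs, ← Real.sqrt_inv]
    norm_num
  have log_exp_moment : Real.log (∫ ω, Real.exp (s * X ω ^ 2) ∂ν) ≤ 1 := by
    refine (Real.log_le_sub_one_of_pos (integral_exp_pos
      (integrable_exp_mul_sq_of_hasSubgaussianMGF hX hs))).trans ?_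
    linarith [Real.sqrt_two_lt_three_halves]
  calc ∫ ω, X ω ^ 2 ∂μ = 4 * c * ∫ ω, s * X ω ^ 2 ∂μ := by
        rw [integral_const_mul, hs_def]
        push_cast
        field_simp
    _ ≤ 4 * c * ((klDiv μ ν).toReal + 1) := by
        gcongr
        exact (integral_le_toReal_klDiv_add_log_integral_exp hμν (hXμ.integrable_sq.const_mul _)
          (integrable_exp_mul_sq_of_hasSubgaussianMGF hX hs)).trans (by gcongr)

end Entropy

section EmpiricalFluctuation

/-- The fluctuation `⟨μ_x - ρ, f⟩` of the empirical measure `μ_x = |ι|⁻¹ ∑ δ_{x_i}` about `ρ`,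
tested against `f`. -/
noncomputable def empiricalFluctuation {E ι 𝕜 : Type*} [MeasurableSpace E] [Fintype ι] [RCLike 𝕜]
    (ρ : Measure E) (f : E → 𝕜) (x : ι → E) : 𝕜 :=
  (Fintype.card ι : 𝕜)⁻¹ * ∑ i, f (x i) - ∫ y, f y ∂ρ

variable {E ι 𝕜 : Type*} [MeasurableSpace E] [Fintype ι] [RCLike 𝕜] {ρ : Measure E} {f : E → 𝕜}

theorem measurable_empiricalFluctuation (hf : Measurable f) :
    Measurable (empiricalFluctuation (ι := ι) ρ f) := by
  unfold empiricalFluctuation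
  fun_prop

variable {M : ℝ}

theorem norm_empiricalFluctuation_le [Nonempty ι] [IsProbabilityMeasure ρ]
    (hf : ∀ y, ‖f y‖ ≤ M) (x : ι → E) : ‖empiricalFluctuation ρ f x‖ ≤ 2 * M := by
  have hmean : ‖(Fintype.card ι : 𝕜)⁻¹ * ∑ i, f (x i)‖ ≤ M := by
    rw [norm_mul, norm_inv, RCLike.norm_natCast, inv_mul_le_iff₀ (by positivity)]
    simpa using norm_sum_le_of_le Finset.univ fun i _ => hf (x i)
  have hint : ‖∫ y, f y ∂ρ‖ ≤ M := by
    simpa using norm_integral_le_of_norm_le_const (μ := ρ) (ae_of_all _ hf)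
  exact (norm_sub_le _ _).trans (by linarith)

theorem memLp_empiricalFluctuation [Nonempty ι] [IsProbabilityMeasure ρ] {μ : Measure (ι → E)}
    [IsFiniteMeasure μ] (hfm : Measurable f) (hf : ∀ y, ‖f y‖ ≤ M) (p : ℝ≥0∞) :
    MemLp (empiricalFluctuation ρ f) p μ :=
  .of_bound (measurable_empiricalFluctuation hfm).aestronglyMeasurable (2 * M)
    (ae_of_all _ (norm_empiricalFluctuation_le hf))

theorem norm_sq_empiricalFluctuation (hf : Integrable f ρ) (x : ι → E) :
    ‖empiricalFluctuation ρ f x‖ ^ 2 =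
      empiricalFluctuation ρ (fun y => RCLike.re (f y)) x ^ 2 +
        empiricalFluctuation ρ (fun y => RCLike.im (f y)) x ^ 2 := by
  have hcard : (Fintype.card ι : 𝕜)⁻¹ = ((Fintype.card ι : ℝ)⁻¹ : ℝ) := by push_cast; rfl
  rw [RCLike.norm_sq_eq_def, ← sq, ← sq]
  simp only [empiricalFluctuation, integral_re hf, integral_im hf, hcard, map_sub,
    RCLike.re_ofReal_mul, RCLike.im_ofReal_mul, map_sum]

theorem hasSubgaussianMGF_empiricalFluctuation [Nonempty ι] [IsProbabilityMeasure ρ] {f : E → ℝ}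
    {a b : ℝ} (hfm : Measurable f) (hf : ∀ y, f y ∈ Set.Icc a b) :
    HasSubgaussianMGF (empiricalFluctuation ρ f) ((‖b - a‖₊ / 2) ^ 2 / Fintype.card ι)
      (Measure.pi fun _ : ι => ρ) := by
  have hoeffding (i : ι) : HasSubgaussianMGF (fun x : ι → E => f (x i) - ∫ y, f y ∂ρ)
      ((‖b - a‖₊ / 2) ^ 2) (Measure.pi fun _ => ρ) := by
    refine HasSubgaussianMGF.of_map (X := fun y => f y - ∫ y, f y ∂ρ) (Y := fun x : ι → E => x i)
      (measurable_pi_apply i).aemeasurable ?_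
    rw [(measurePreserving_eval (fun _ : ι => ρ) i).map_eq]
    exact hasSubgaussianMGF_of_mem_Icc hfm.aemeasurable (ae_of_all _ hf)
  have hindep : iIndepFun (fun (i : ι) (x : ι → E) => f (x i) - ∫ y, f y ∂ρ)
      (Measure.pi fun _ => ρ) :=
    iIndepFun_pi (X := fun _ y => f y - ∫ y, f y ∂ρ) fun _ => (hfm.sub_const _).aemeasurable
  have hmean := (HasSubgaussianMGF.sum_of_iIndepFun hindep (s := Finset.univ)
    fun i _ => hoeffding i).const_mul (Fintype.card ι : ℝ)⁻¹
  have hproxy : (‖b - a‖₊ / 2) ^ 2 / (Fintype.card ι : ℝ≥0) =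
      (Fintype.card ι : ℝ≥0)⁻¹ ^ 2 * ∑ _i : ι, (‖b - a‖₊ / 2) ^ 2 := by
    rw [Finset.sum_const, Finset.card_univ, nsmul_eq_mul]
    field_simp
  rw [hproxy]
  refine hmean.congr (ae_of_all _ fun x => ?_)
  simp [empiricalFluctuation, Finset.sum_sub_distrib, mul_sub]

variable [Nonempty ι] [IsProbabilityMeasure ρ] {μ : Measure (ι → E)} [IsProbabilityMeasure μ]
  (hμ : klDiv μ (Measure.pi fun _ => ρ) ≠ ∞)

include hμ

theorem integral_sq_empiricalFluctuation_le {f : E → ℝ} (hfm : Measurable f)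
    (hf : ∀ y, |f y| ≤ M) :
    ∫ x, empiricalFluctuation ρ f x ^ 2 ∂μ ≤
      4 * M ^ 2 / Fintype.card ι * ((klDiv μ (Measure.pi fun _ => ρ)).toReal + 1) := by
  have hsub := hasSubgaussianMGF_empiricalFluctuation (ι := ι) (ρ := ρ) hfm
    fun y => abs_le.1 (hf y)
  refine (integral_sq_le_of_hasSubgaussianMGF hμ hsub
    (memLp_empiricalFluctuation hfm hf 2)).trans_eq ?_
  have hwidth : ((‖M - -M‖₊ / 2 : ℝ≥0) : ℝ) ^ 2 = M ^ 2 := by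
    simp [← two_mul]
  rw [NNReal.coe_div, NNReal.coe_pow, hwidth, NNReal.coe_natCast, mul_div_assoc]

theorem integral_norm_sq_empiricalFluctuation_le (hfm : Measurable f) (hf : ∀ y, ‖f y‖ ≤ M) :
    ∫ x, ‖empiricalFluctuation ρ f x‖ ^ 2 ∂μ ≤
      8 * M ^ 2 / Fintype.card ι * ((klDiv μ (Measure.pi fun _ => ρ)).toReal + 1) := by
  have hre_le (y : E) : |RCLike.re (f y)| ≤ M := (RCLike.abs_re_le_norm _).trans (hf y)
  have him_le (y : E) : |RCLike.im (f y)| ≤ M := (RCLike.abs_im_le_norm _).trans (hf y)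
  have hre_meas : Measurable fun y => RCLike.re (f y) := by fun_prop
  have him_meas : Measurable fun y => RCLike.im (f y) := by fun_prop
  simp only [norm_sq_empiricalFluctuation
    (Integrable.of_bound hfm.aestronglyMeasurable M (ae_of_all ρ hf))]
  rw [integral_add (memLp_empiricalFluctuation hre_meas hre_le 2).integrable_sq
    (memLp_empiricalFluctuation him_meas him_le 2).integrable_sq]
  refine (add_le_add (integral_sq_empiricalFluctuation_le hμ hre_meas hre_le)
    (integral_sq_empiricalFluctuation_le hμ him_meas him_le)).trans_eq ?_
  ring

theorem integral_tsum_mul_norm_sq_empiricalFluctuation_le {κ : Type*} [Countable κ] {w : κ → ℝ}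
    (hw : ∀ k, 0 ≤ w k) (hw_sum : Summable w) {f : κ → E → 𝕜} (hfm : ∀ k, Measurable (f k))
    (hf : ∀ k y, ‖f k y‖ ≤ M) :
    ∫ x, ∑' k, w k * ‖empiricalFluctuation ρ (f k) x‖ ^ 2 ∂μ ≤
      8 * M ^ 2 * (∑' k, w k) / Fintype.card ι *
        ((klDiv μ (Measure.pi fun _ => ρ)).toReal + 1) := by
  set B : ℝ := 8 * M ^ 2 / Fintype.card ι * ((klDiv μ (Measure.pi fun _ => ρ)).toReal + 1)
    with hB
  have hterm_int (k : κ) : Integrable (fun x => w k * ‖empiricalFluctuation ρ (f k) x‖ ^ 2) μ :=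
    ((memLp_empiricalFluctuation (hfm k) (hf k) 2).norm.integrable_sq).const_mul (w k)
  have hterm_le (k : κ) : ∫ x, w k * ‖empiricalFluctuation ρ (f k) x‖ ^ 2 ∂μ ≤ w k * B := by
    rw [integral_const_mul]
    exact mul_le_mul_of_nonneg_left
      (integral_norm_sq_empiricalFluctuation_le hμ (hfm k) (hf k)) (hw k)
  have hterm_nonneg (k : κ) (x : ι → E) : 0 ≤ w k * ‖empiricalFluctuation ρ (f k) x‖ ^ 2 :=
    mul_nonneg (hw k) (by positivity)
  have hsum : Summable fun k => ∫ x, w k * ‖empiricalFluctuation ρ (f k) x‖ ^ 2 ∂μ :=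
    .of_nonneg_of_le (fun k => integral_nonneg (hterm_nonneg k)) hterm_le (hw_sum.mul_right B)
  calc ∫ x, ∑' k, w k * ‖empiricalFluctuation ρ (f k) x‖ ^ 2 ∂μ
      = ∑' k, ∫ x, w k * ‖empiricalFluctuation ρ (f k) x‖ ^ 2 ∂μ :=
        (integral_tsum_of_summable_integral_norm hterm_int (by
          simpa only [Real.norm_of_nonneg (hterm_nonneg _ _)] using hsum)).symm
    _ ≤ ∑' k, w k * B := hsum.tsum_le_tsum hterm_le (hw_sum.mul_right B)
    _ = _ := by rw [tsum_mul_right, hB]; ring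

end EmpiricalFluctuation

section FourierModes

theorem summable_norm_toLp_intCast_rpow {ι : Type*} [Fintype ι] {r : ℝ} (hr : r < -Fintype.card ι) :
    Summable fun k : ι → ℤ => ‖WithLp.toLp 2 fun j => (k j : ℝ)‖ ^ r := by
  let b := (EuclideanSpace.basisFun ι ℝ).toBasis
  let e : (ι → ℤ) ≃ Submodule.span ℤ (Set.range b) := (b.restrictScalars ℤ).equivFun.symm.toEquiv
  have he (k : ι → ℤ) : (e k : EuclideanSpace ℝ ι) = WithLp.toLp 2 fun j => (k j : ℝ) := by
    ext j
    have hsum : e k = ∑ i, k i • b.restrictScalars ℤ i := Module.Basis.equivFun_symm_apply _ k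
    rw [hsum, Submodule.coe_sum]
    simp only [Submodule.coe_smul, Module.Basis.restrictScalars_apply]
    simp [b, Pi.single_apply]
  have hrank : Module.finrank ℤ (Submodule.span ℤ (Set.range b)) = Fintype.card ι :=
    Module.finrank_eq_card_basis (b.restrictScalars ℤ)
  have hlattice := ZLattice.summable_norm_rpow (Submodule.span ℤ (Set.range b)) r (by rwa [hrank])
  refine (e.summable_iff.2 hlattice).congr fun k => ?_
  simp only [Function.comp_apply, Submodule.coe_norm, he]

theorem summable_one_add_sum_sq_rpow_neg {ι : Type*} [Fintype ι] {α : ℝ}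
    (hα : (Fintype.card ι : ℝ) / 2 < α) :
    Summable fun k : ι → ℤ => (1 + ∑ j, (k j : ℝ) ^ 2) ^ (-α) := by
  have hα_pos : 0 < α := lt_of_le_of_lt (by positivity) hα
  refine .of_norm_bounded_eventually
    (summable_norm_toLp_intCast_rpow (ι := ι) (r := -(2 * α)) (by linarith)) ?_
  filter_upwards [(Set.finite_singleton (0 : ι → ℤ)).compl_mem_cofinite] with k hk
  have hnorm_pos : 0 < ‖WithLp.toLp 2 fun j => (k j : ℝ)‖ := by
    rw [norm_pos_iff]
    intro h
    exact hk (funext fun j => by simpa using congrArg (fun v => v j) h)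
  rw [Real.norm_of_nonneg (by positivity), ← mul_neg, Real.rpow_mul hnorm_pos.le, Real.rpow_two]
  refine Real.rpow_le_rpow_of_nonpos (by positivity) ?_ (by linarith)
  simp [EuclideanSpace.norm_sq_eq]

theorem measurable_ek (d : ℕ) (k : Fin d → ℤ) : Measurable (ek d k) :=
  Finset.measurable_prod _ fun j _ =>
    (fourier (k j)).continuous.measurable.comp (measurable_pi_apply j)

theorem norm_ek (d : ℕ) (k : Fin d → ℤ) (x : Torus d) : ‖ek d k x‖ = 1 := by
  simp only [ek, norm_prod, fourier_apply, Circle.norm_coe, Finset.prod_const_one]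

end FourierModes

/-- **Uniform `H^{−α}` estimate on the fluctuation of the empirical measure
(Lemma 2.5 of Wang–Zhao–Zhu).**  For every `d ≥ 1` and `α > d/2` there is `C_α > 0`
(depending only on `α` and `d`) such that for every `N ≥ 2`, every probability measure
`ρ̄` on `𝕋^d` and every probability measure `ρ_N` on `(𝕋^d)^N` with
`H(ρ_N | ρ̄^{⊗N}) < ∞`,
`∫ ∑_{k ∈ ℤ^d} ⟨k⟩^{−2α} |N⁻¹ ∑_i e_k(x_i) − ∫ e_k dρ̄|² dρ_N
  ≤ (C_α/N)(H(ρ_N | ρ̄^{⊗N}) + 1)`,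
where `⟨k⟩^{−2α} = (1 + |k|²)^{−α}`. -/
theorem statement7 (d : ℕ) (hd : 1 ≤ d) (α : ℝ) (hα : (d : ℝ) / 2 < α) :
    ∃ C : ℝ, 0 < C ∧
      ∀ N : ℕ, 2 ≤ N →
      ∀ (ρ : Measure (Torus d)), IsProbabilityMeasure ρ →
      ∀ (ρN : Measure (Fin N → Torus d)), IsProbabilityMeasure ρN →
        relEntropy ρN (Measure.pi fun _ => ρ) < ⊤ →
        ∫ x : Fin N → Torus d,
            ∑' k : Fin d → ℤ,
              (1 + ∑ j, ((k j : ℝ)) ^ 2) ^ (-α) *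
                ‖(N : ℂ)⁻¹ * (∑ i, ek d k (x i)) - ∫ y, ek d k y ∂ρ‖ ^ 2
          ∂ρN
        ≤ C / N * ((relEntropy ρN (Measure.pi fun _ => ρ)).toReal + 1) := by
  have hw_sum : Summable fun k : Fin d → ℤ => (1 + ∑ j, (k j : ℝ) ^ 2) ^ (-α) :=
    summable_one_add_sum_sq_rpow_neg (by simpa using hα)
  have hw_pos (k : Fin d → ℤ) : 0 < (1 + ∑ j, (k j : ℝ) ^ 2) ^ (-α) := by positivity
  refine ⟨8 * ∑' k : Fin d → ℤ, (1 + ∑ j, (k j : ℝ) ^ 2) ^ (-α),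
    mul_pos (by norm_num) (hw_sum.tsum_pos (fun k => (hw_pos k).le) 0 (hw_pos 0)), ?_⟩
  intro N hN ρ _ ρN _ hfin
  have : NeZero N := ⟨by lia⟩
  rw [relEntropy_eq_coe_klDiv] at hfin ⊢
  have hkl : klDiv ρN (Measure.pi fun _ => ρ) ≠ ∞ := by simpa [lt_top_iff_ne_top] using hfin
  simpa [empiricalFluctuation] using integral_tsum_mul_norm_sq_empiricalFluctuation_le hkl
    (fun k => (hw_pos k).le) hw_sum (measurable_ek d) fun k x => (norm_ek d k x).le
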